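/- Let Q₂(2k) denote the number of Goldbach partitions of the even integer 2k. Then the limit, as n → ∞, of (Σ_{2<k≤n} k·Q₂(2k)) / (n · Σ_{2<k≤n} Q₂(2k)) equals 2/3. Equivalently, if 2Gₙ is the even number partitioned by a uniformly random Goldbach partition from the set of all Goldbach partitions of even integers in (4, 2n], then E(Gₙ)/n → 2/3 as n → ∞. -/

import Mathlib

open Filter Topology Asymptotics MeasureTheory

/-- `Q2 k` is the number of Goldbach partitions of `2*k`, i.e. the number of
unordered pairs `{p, q}` of odd primes with `p + q = 2*k`. -/
def Q2 (k : ℕ) : ℕ :=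
  ((Finset.range (2 * k + 1) ×ˢ Finset.range (2 * k + 1)).filter
    (fun pq => pq.1.Prime ∧ pq.2.Prime ∧ Odd pq.1 ∧ Odd pq.2 ∧
      pq.1 ≤ pq.2 ∧ pq.1 + pq.2 = 2 * k)).card

/-- `fOdd z = Σ_{p odd prime} z^p`. -/
noncomputable def fOdd (z : ℝ) : ℝ := ∑' p : ℕ, if p.Prime ∧ Odd p then z ^ p else 0

/-- `fOdd' z = Σ_{p odd prime} p * z^(p-1)`, the derivative of `fOdd` on `(0,1)`. -/
noncomputable def fOdd' (z : ℝ) : ℝ :=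
  ∑' p : ℕ, if p.Prime ∧ Odd p then (p : ℝ) * z ^ (p - 1) else 0

/-- `fOdd'' z = Σ_{p odd prime} p * (p-1) * z^(p-2)`, the second derivative of `fOdd` on `(0,1)`. -/
noncomputable def fOdd'' (z : ℝ) : ℝ :=
  ∑' p : ℕ, if p.Prime ∧ Odd p then (p : ℝ) * ((p : ℝ) - 1) * z ^ (p - 2) else 0

/-- The prime-counting function at a real argument: the number of primes `≤ y`. -/
noncomputable def primePi (y : ℝ) : ℕ := Nat.primeCounting ⌊y⌋₊

/-!
Call `f` regularly varying of index `α` if `f (t * x) / f x → t ^ α` for every `t > 0`. If `c ≥ 0`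
has a regularly varying summatory function `C` of index `α`, then
`∑ k ≤ x, k * c k = x * C x - ∫ u in 0..x, C u` by Abel summation, and the integral is asymptotic
to `x * C x / (α + 1)`; hence the mean of `k / x` with respect to the weights `c k` tends to
`α / (α + 1)`. For `c k = Q2 k` the index is `2`, which gives `2 / 3`.

To see that the index is `2`, let `π₁ x` count the odd primes up to `x`. By the prime number
theorem `π₁` is regularly varying of index `1`, and therefore the number of ordered pairs of odd
primes with sum at most `2 * x` is asymptotic to `π₁ (2 * x) ^ 2 / 2`. Each partition `{p, q}` is
counted twice, except when `p = q`, which costs a negligible `π₁ x`.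

The prime number theorem is deduced from the Wiener–Ikehara theorem: `B u = exp (-u) * ψ (exp u)`
has a Laplace transform that is continuous on `0 ≤ re z` apart from a simple pole at `0`. Averaging
`B - 1` against a kernel with compactly supported Fourier transform gives a Fourier integral of the
continuous part over the boundary line, which tends to zero by the Riemann–Lebesgue lemma. Since
`exp u * B u` is monotone, concentrated kernels recover the values of `B`.
-/

section Bandlimited

open FourierTransform Convolution ComplexConjugate

lemma fourier_conj_comp_neg {V : Type*} [NormedAddCommGroup V] [InnerProductSpace ℝ V]
    [MeasurableSpace V] [BorelSpace V] [FiniteDimensional ℝ V] (f : V → ℂ) (w : V) :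
    𝓕 (fun x => conj (f (-x))) w = conj (𝓕 f w) := by
  rw [Real.fourier_eq', Real.fourier_eq', ← integral_conj, ← integral_neg_eq_self]
  refine integral_congr_ae (Eventually.of_forall fun x => ?_)
  simp [← Complex.exp_conj, inner_neg_left, Complex.conj_ofNat]

lemma fourier_convolution_conj_comp_neg {V : Type*} [NormedAddCommGroup V] [InnerProductSpace ℝ V]
    [MeasurableSpace V] [BorelSpace V] [FiniteDimensional ℝ V] {f : V → ℂ} (hf : Integrable f)
    (w : V) :
    𝓕 (f ⋆[ContinuousLinearMap.mul ℂ ℂ] fun x => conj (f (-x))) w = (‖𝓕 f w‖ ^ 2 : ℝ) := by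
  have hconj : Integrable fun x => conj (f (-x)) :=
    (RCLike.conjLIE.integrable_comp_iff (φ := fun x => f (-x))).2 hf.comp_neg
  rw [Real.fourier_mul_convolution_eq hf hconj, fourier_conj_comp_neg, RCLike.mul_conj]
  push_cast
  rfl

/-- A probability density on the line with compactly supported Fourier transform; the density is
itself written as a Fourier transform. These are the averaging kernels of the Tauberian theorem
below. -/
structure IsBandlimitedDensity (K : ℝ → ℝ) : Prop where
  nonneg : ∀ v, 0 ≤ K v
  integral_eq_one : ∫ v, K v = 1
  exists_fourier_eq : ∃ φ : ℝ → ℂ, Continuous φ ∧ HasCompactSupport φ ∧ ∀ v, 𝓕 φ v = K v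

namespace IsBandlimitedDensity

variable {K : ℝ → ℝ}

lemma integrable (hK : IsBandlimitedDensity K) : Integrable K :=
  integrable_of_integral_eq_one hK.integral_eq_one

lemma norm_fourier_sq {g : ℝ → ℂ} (hg : ContDiff ℝ ((⊤ : ℕ∞) : WithTop ℕ∞) g)
    (hgs : HasCompactSupport g) (hnorm : ∫ x, ‖g x‖ ^ 2 = 1) :
    IsBandlimitedDensity fun v => ‖𝓕 g v‖ ^ 2 where
  nonneg v := by positivity
  integral_eq_one := hnorm ▸ (hgs.toSchwartzMap hg).integral_norm_sq_fourier
  exists_fourier_eq := by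
    have hconj : Continuous fun x => conj (g (-x)) :=
      Complex.continuous_conj.comp (hg.continuous.comp continuous_neg)
    refine ⟨g ⋆[ContinuousLinearMap.mul ℂ ℂ] fun x => conj (g (-x)), ?_, ?_, fun v => ?_⟩
    · exact hgs.continuous_convolution_left _ hg.continuous
        (hconj.locallyIntegrable (μ := volume))
    · exact hgs.convolution _ ((hgs.comp_homeomorph (Homeomorph.neg ℝ)).comp_left
        (g := fun z : ℂ => conj z) (map_zero _))
    · exact fourier_convolution_conj_comp_neg (hg.continuous.integrable_of_hasCompactSupport hgs) v

lemma exists_bandlimited : ∃ K, IsBandlimitedDensity K := by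
  let b : ContDiffBump (0 : ℝ) := ⟨1, 2, one_pos, one_lt_two⟩
  have b_sq_pos : 0 < ∫ x, b x ^ 2 := by
    refine (b.continuous.pow 2).integral_pos_of_hasCompactSupport_nonneg_nonzero (x := 0)
      (b.hasCompactSupport.comp_left (g := (· ^ 2)) (by simp)) (fun _ => by positivity) ?_
    simp [b.eventuallyEq_one.eq_of_nhds]
  let g : ℝ → ℂ := fun x => (b x / √(∫ y, b y ^ 2) : ℝ)
  have g_smooth : ContDiff ℝ ((⊤ : ℕ∞) : WithTop ℕ∞) g :=
    Complex.ofRealCLM.contDiff.comp (b.contDiff.div_const _)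
  have g_supp : HasCompactSupport g :=
    b.hasCompactSupport.comp_left (g := fun t : ℝ => ((t / √(∫ y, b y ^ 2) : ℝ) : ℂ)) (by simp)
  refine ⟨_, norm_fourier_sq g_smooth g_supp ?_⟩
  simp only [g, Complex.norm_real, Real.norm_eq_abs, sq_abs, div_pow, Real.sq_sqrt b_sq_pos.le]
  rw [integral_div, div_self b_sq_pos.ne']

lemma dilate (hK : IsBandlimitedDensity K) {l : ℝ} (hl : 0 < l) :
    IsBandlimitedDensity fun v => l * K (l * v) where
  nonneg v := mul_nonneg hl.le (hK.nonneg _)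
  integral_eq_one := by
    rw [integral_const_mul, Measure.integral_comp_mul_left, hK.integral_eq_one,
      abs_of_pos (inv_pos.2 hl), smul_eq_mul, mul_one, mul_inv_cancel₀ hl.ne']
  exists_fourier_eq := by
    obtain ⟨φ, hφ, hφs, hF⟩ := hK.exists_fourier_eq
    refine ⟨fun x => φ (l⁻¹ * x), by fun_prop,
      hφs.comp_homeomorph (Homeomorph.mulLeft₀ l⁻¹ (inv_pos.2 hl).ne'), fun v => ?_⟩
    have hsubst := Measure.integral_comp_mul_left
      (fun x : ℝ => Complex.exp (↑(-2 * Real.pi * x * (l * v)) * Complex.I) • φ x) l⁻¹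
    rw [inv_inv, abs_of_pos hl, ← Real.fourier_real_eq_integral_exp_smul, hF,
      Complex.real_smul] at hsubst
    rw [Real.fourier_real_eq_integral_exp_smul, Complex.ofReal_mul, ← hsubst]
    refine integral_congr_ae (Eventually.of_forall fun x => ?_)
    have hphase : -2 * Real.pi * (l⁻¹ * x) * (l * v) = -2 * Real.pi * x * v := by
      field_simp
    simp only [hphase]

lemma exists_concentrated {δ η : ℝ} (hδ : 0 < δ) (hη : 0 < η) :
    ∃ K, IsBandlimitedDensity K ∧ 1 - η ≤ ∫ v in -δ..δ, K v := by
  obtain ⟨K, hK⟩ := exists_bandlimited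
  have hlim : Tendsto (fun l : ℝ => ∫ v in l * -δ..l * δ, K v) atTop (𝓝 1) := by
    rw [← hK.integral_eq_one]
    exact intervalIntegral_tendsto_integral hK.integrable
      (tendsto_id.atTop_mul_const_of_neg (neg_neg_of_pos hδ)) (tendsto_id.atTop_mul_const hδ)
  obtain ⟨l, hl, hl0⟩ := ((hlim.eventually_const_le (sub_lt_self 1 hη)).and
    (eventually_gt_atTop 0)).exists
  refine ⟨_, hK.dilate hl0, ?_⟩
  rwa [intervalIntegral.integral_const_mul, intervalIntegral.mul_integral_comp_mul_left]

end IsBandlimitedDensity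

end Bandlimited

section Laplace

open FourierTransform

lemma tendsto_setIntegral_exp_neg_mul_smul {E : Type*} [NormedAddCommGroup E] [NormedSpace ℝ E]
    {f : ℝ → E} (hf : IntegrableOn f (Set.Ioi 0)) :
    Tendsto (fun ε : ℝ => ∫ u in Set.Ioi 0, Real.exp (-ε * u) • f u) (𝓝[>] 0)
      (𝓝 (∫ u in Set.Ioi 0, f u)) := by
  refine tendsto_integral_filter_of_dominated_convergence (fun u => ‖f u‖)
    (Eventually.of_forall fun ε => ?_) ?_ hf.norm (Eventually.of_forall fun u => ?_)
  · exact (by fun_prop : Continuous fun u => Real.exp (-ε * u)).aestronglyMeasurable.smul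
      hf.aestronglyMeasurable
  · filter_upwards [self_mem_nhdsWithin] with ε (hε : 0 < ε)
    filter_upwards [ae_restrict_mem measurableSet_Ioi] with u (hu : 0 < u)
    have hexp : Real.exp (-ε * u) ≤ 1 :=
      Real.exp_le_one_iff.2 (mul_nonpos_of_nonpos_of_nonneg (neg_nonpos.2 hε.le) hu.le)
    rw [norm_smul, Real.norm_eq_abs, Real.abs_exp]
    exact mul_le_of_le_one_left (norm_nonneg _) hexp
  · have hcont : Continuous fun ε : ℝ => Real.exp (-ε * u) • f u := by fun_prop
    simpa using (hcont.tendsto 0).mono_left nhdsWithin_le_nhds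

lemma integral_fourier_sub_mul {φ g : ℝ → ℂ} (hφ : Integrable φ) (hg : Integrable g) (x : ℝ) :
    ∫ u, 𝓕 φ (u - x) * g u = 𝓕⁻ (fun ξ => φ ξ * 𝓕 g ξ) x := by
  let wave : ℝ → ℂ := fun ξ => Complex.exp (((2 * Real.pi * x * ξ : ℝ) : ℂ) * Complex.I)
  have wave_cont : Continuous wave := by fun_prop
  have hmod : Integrable fun ξ => wave ξ * φ ξ :=
    hφ.bdd_mul (c := 1) wave_cont.aestronglyMeasurable
      (Eventually.of_forall fun ξ => (Complex.norm_exp_ofReal_mul_I _).le)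
  have hshift (u : ℝ) : 𝓕 (fun ξ => wave ξ * φ ξ) u = 𝓕 φ (u - x) := by
    simp only [Real.fourier_real_eq_integral_exp_smul, wave, smul_eq_mul, ← mul_assoc,
      ← Complex.exp_add]
    refine integral_congr_ae (Eventually.of_forall fun ξ => ?_)
    dsimp only
    congr 2
    push_cast
    ring
  calc ∫ u, 𝓕 φ (u - x) * g u = ∫ u, 𝓕 (fun ξ => wave ξ * φ ξ) u • g u := by
        simp only [hshift, smul_eq_mul]
    _ = ∫ ξ, (wave ξ * φ ξ) • 𝓕 g ξ := by
        simpa using! VectorFourier.integral_fourierIntegral_smul_eq_flip (L := innerₗ ℝ)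
          Real.continuous_fourierChar continuous_inner hmod hg
    _ = 𝓕⁻ (fun ξ => φ ξ * 𝓕 g ξ) x := by
        rw [Real.fourierInv_eq']
        congr! 2 with ξ
        simp only [wave, smul_eq_mul, mul_assoc, RCLike.inner_apply, conj_trivial]

lemma tendsto_fourierInv_mul_verticalLine {φ : ℝ → ℂ} {G : ℂ → ℂ} (hφ : Continuous φ)
    (hφs : HasCompactSupport φ) (hG : ContinuousOn G {z | 0 ≤ z.re}) (x : ℝ) :
    Tendsto (fun ε : ℝ => 𝓕⁻ (fun ξ : ℝ => φ ξ * G (ε + 2 * Real.pi * ξ * Complex.I)) x) (𝓝[>] 0)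
      (𝓝 (𝓕⁻ (fun ξ : ℝ => φ ξ * G (2 * Real.pi * ξ * Complex.I)) x)) := by
  have hcont : ContinuousOn
      (fun ε : ℝ => 𝓕⁻ (fun ξ : ℝ => φ ξ * G (ε + 2 * Real.pi * ξ * Complex.I)) x) (Set.Ici 0) := by
    simp only [Real.fourierInv_eq', smul_eq_mul]
    refine continuousOn_integral_of_compact_support hφs ?_ ?_
    · refine Continuous.continuousOn (by fun_prop) |>.mul <|
        Continuous.continuousOn (by fun_prop) |>.mul <| hG.comp (by fun_prop) ?_
      rintro ⟨ε, ξ⟩ ⟨hε, -⟩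
      simpa using hε
    · intro ε ξ _ hξ
      simp [image_eq_zero_of_notMem_tsupport hξ]
  simpa using (hcont 0 Set.self_mem_Ici).mono_left (nhdsWithin_mono 0 Set.Ioi_subset_Ici_self)

lemma fourier_indicator_exp_neg_mul (b : ℝ → ℂ) (ε ξ : ℝ) :
    𝓕 ((Set.Ioi 0).indicator fun u : ℝ => Real.exp (-ε * u) * b u) ξ =
      ∫ u in Set.Ioi (0 : ℝ), Complex.exp (-(ε + 2 * Real.pi * ξ * Complex.I) * u) * b u := by
  rw [Real.fourier_real_eq_integral_exp_smul, ← integral_indicator measurableSet_Ioi]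
  refine integral_congr_ae (Eventually.of_forall fun u => ?_)
  simp only [Set.indicator]
  split_ifs
  · rw [smul_eq_mul, Complex.ofReal_exp, ← mul_assoc, ← Complex.exp_add]
    congr 2
    push_cast
    ring
  · simp

lemma setIntegral_exp_neg_mul_smul_fourier_sub_mul {φ b : ℝ → ℂ} {M ε : ℝ} (hφ : Integrable φ)
    (hb : AEStronglyMeasurable b) (hbM : ∀ u, ‖b u‖ ≤ M) (hε : 0 < ε) (x : ℝ) :
    ∫ u in Set.Ioi 0, Real.exp (-ε * u) • (𝓕 φ (u - x) * b u) =
      𝓕⁻ (fun ξ : ℝ => φ ξ *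
        ∫ u in Set.Ioi (0 : ℝ), Complex.exp (-(ε + 2 * Real.pi * ξ * Complex.I) * u) * b u) x := by
  have hint : Integrable ((Set.Ioi 0).indicator fun u : ℝ => Real.exp (-ε * u) * b u) :=
    (integrable_indicator_iff measurableSet_Ioi).2 <|
      (integrableOn_exp_mul_Ioi (neg_neg_of_pos hε) 0).ofReal.mul_bdd hb.restrict
        (Eventually.of_forall hbM)
  simp only [← fourier_indicator_exp_neg_mul]
  rw [← integral_fourier_sub_mul hφ hint, ← integral_indicator measurableSet_Ioi]
  refine integral_congr_ae (Eventually.of_forall fun u => ?_)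
  by_cases hu : u ∈ Set.Ioi (0 : ℝ)
  · simp only [Set.indicator_of_mem hu, Complex.real_smul]
    ring
  · simp only [Set.indicator_of_notMem hu, mul_zero]

/-- Damping by `exp (-ε * u)` turns the smoothed function into a Fourier integral of its Laplace
transform on `re z = ε`; on the boundary line the Riemann–Lebesgue lemma applies. -/
theorem tendsto_setIntegral_fourier_sub_mul_zero {φ b : ℝ → ℂ} {G : ℂ → ℂ} {M : ℝ}
    (hφ : Continuous φ) (hφs : HasCompactSupport φ) (hφF : Integrable (𝓕 φ))
    (hb : AEStronglyMeasurable b) (hbM : ∀ u, ‖b u‖ ≤ M) (hG : ContinuousOn G {z | 0 ≤ z.re})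
    (hbG : ∀ z : ℂ, 0 < z.re → ∫ u in Set.Ioi (0 : ℝ), Complex.exp (-z * u) * b u = G z) :
    Tendsto (fun x => ∫ u in Set.Ioi 0, 𝓕 φ (u - x) * b u) atTop (𝓝 0) := by
  have hboundary (x : ℝ) : ∫ u in Set.Ioi 0, 𝓕 φ (u - x) * b u =
      𝓕⁻ (fun ξ : ℝ => φ ξ * G (2 * Real.pi * ξ * Complex.I)) x := by
    have hint : Integrable fun u => 𝓕 φ (u - x) * b u :=
      (hφF.comp_sub_right x).mul_bdd hb (Eventually.of_forall hbM)
    refine tendsto_nhds_unique (tendsto_setIntegral_exp_neg_mul_smul hint.integrableOn) ?_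
    refine (tendsto_fourierInv_mul_verticalLine hφ hφs hG x).congr' ?_
    filter_upwards [self_mem_nhdsWithin] with ε (hε : 0 < ε)
    rw [setIntegral_exp_neg_mul_smul_fourier_sub_mul (hφ.integrable_of_hasCompactSupport hφs)
      hb hbM hε]
    congr! with ξ
    exact (hbG _ (by simpa using hε)).symm
  simp only [hboundary, Real.fourierInv_eq_fourier_neg]
  exact (Real.zero_at_infty_fourier _).comp
    (tendsto_neg_atTop_atBot.mono_right atBot_le_cocompact)

end Laplace

section Tauberian

open FourierTransform

variable {K B : ℝ → ℝ} {M A : ℝ}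

lemma measurable_of_monotone_exp_mul (hmono : Monotone fun u => Real.exp u * B u) :
    Measurable B := by
  have hB : B = fun u => Real.exp (-u) * (Real.exp u * B u) := by
    ext u
    rw [← mul_assoc, ← Real.exp_add, neg_add_cancel, Real.exp_zero, one_mul]
  rw [hB]
  exact (by fun_prop : Measurable fun u => Real.exp (-u)).mul hmono.measurable

lemma le_exp_mul_of_monotone_exp_mul (hB0 : ∀ u, 0 ≤ B u)
    (hmono : Monotone fun u => Real.exp u * B u) {u v t : ℝ} (huv : u ≤ v) (hvt : v ≤ u + t) :
    B u ≤ Real.exp t * B v := by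
  refine le_of_mul_le_mul_left ?_ (Real.exp_pos u)
  calc Real.exp u * B u ≤ Real.exp v * B v := hmono huv
    _ ≤ Real.exp (u + t) * B v :=
        mul_le_mul_of_nonneg_right (Real.exp_le_exp.2 hvt) (hB0 v)
    _ = Real.exp u * (Real.exp t * B v) := by rw [Real.exp_add, mul_assoc]

lemma integrable_mul_comp_add_left (hK : Integrable K) (hB : Measurable B)
    (hB0 : ∀ u, 0 ≤ B u) (hBM : ∀ u, B u ≤ M) (x : ℝ) : Integrable fun v => K v * B (x + v) :=
  hK.mul_bdd (c := M) (hB.comp (measurable_const_add x)).aestronglyMeasurable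
    (Eventually.of_forall fun v => by simpa [abs_of_nonneg (hB0 (x + v))] using hBM (x + v))

namespace IsBandlimitedDensity

lemma mul_intervalIntegral_le (hK : IsBandlimitedDensity K) (hB0 : ∀ u, 0 ≤ B u)
    (hBM : ∀ u, B u ≤ M) (hmono : Monotone fun u => Real.exp u * B u) {δ : ℝ} (hδ : 0 ≤ δ)
    (x : ℝ) :
    B x * ∫ v in -δ..δ, K v ≤ Real.exp (2 * δ) * ∫ v, K v * B (x + δ + v) := by
  have hint := integrable_mul_comp_add_left hK.integrable (measurable_of_monotone_exp_mul hmono)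
    hB0 hBM (x + δ)
  rw [intervalIntegral.integral_of_le (neg_le_self hδ), ← integral_const_mul, ← integral_const_mul]
  calc ∫ v in Set.Ioc (-δ) δ, B x * K v
      ≤ ∫ v in Set.Ioc (-δ) δ, Real.exp (2 * δ) * (K v * B (x + δ + v)) := by
        refine setIntegral_mono_on (hK.integrable.const_mul _).integrableOn
          (hint.const_mul _).integrableOn measurableSet_Ioc fun v hv => ?_
        rw [mul_comm, mul_left_comm]
        exact mul_le_mul_of_nonneg_left (le_exp_mul_of_monotone_exp_mul hB0 hmono
          (by linarith [hv.1]) (by linarith [hv.2])) (hK.nonneg v)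
    _ ≤ ∫ v, Real.exp (2 * δ) * (K v * B (x + δ + v)) :=
        setIntegral_le_integral (hint.const_mul _) (Eventually.of_forall fun v =>
          mul_nonneg (Real.exp_nonneg _) (mul_nonneg (hK.nonneg v) (hB0 _)))

lemma integral_mul_le (hK : IsBandlimitedDensity K) (hB0 : ∀ u, 0 ≤ B u) (hBM : ∀ u, B u ≤ M)
    (hmono : Monotone fun u => Real.exp u * B u) {δ : ℝ} (hδ : 0 ≤ δ) (x : ℝ) :
    ∫ v, K v * B (x - δ + v) ≤ Real.exp (2 * δ) * B x + M * (1 - ∫ v in -δ..δ, K v) := by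
  have hint := integrable_mul_comp_add_left hK.integrable (measurable_of_monotone_exp_mul hmono)
    hB0 hBM (x - δ)
  have htail : ∫ v in (Set.Ioc (-δ) δ)ᶜ, K v = 1 - ∫ v in Set.Ioc (-δ) δ, K v := by
    rw [← hK.integral_eq_one, ← integral_add_compl measurableSet_Ioc hK.integrable,
      add_sub_cancel_left]
  rw [intervalIntegral.integral_of_le (neg_le_self hδ), ← htail,
    ← integral_add_compl (s := Set.Ioc (-δ) δ) measurableSet_Ioc hint]
  refine add_le_add ?_ ?_
  · calc ∫ v in Set.Ioc (-δ) δ, K v * B (x - δ + v)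
        ≤ ∫ v in Set.Ioc (-δ) δ, K v * (Real.exp (2 * δ) * B x) :=
          setIntegral_mono_on hint.integrableOn (hK.integrable.mul_const _).integrableOn
            measurableSet_Ioc fun v hv => mul_le_mul_of_nonneg_left
              (le_exp_mul_of_monotone_exp_mul hB0 hmono (by linarith [hv.2]) (by linarith [hv.1]))
              (hK.nonneg v)
      _ ≤ ∫ v, K v * (Real.exp (2 * δ) * B x) :=
          setIntegral_le_integral (hK.integrable.mul_const _) (Eventually.of_forall fun v =>
            mul_nonneg (hK.nonneg v) (mul_nonneg (Real.exp_nonneg _) (hB0 x)))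
      _ = Real.exp (2 * δ) * B x := by rw [integral_mul_const, hK.integral_eq_one, one_mul]
  · rw [mul_comm, ← integral_mul_const]
    exact setIntegral_mono_on hint.integrableOn (hK.integrable.mul_const _).integrableOn
      measurableSet_Ioc.compl fun v _ => mul_le_mul_of_nonneg_left (hBM _) (hK.nonneg v)

end IsBandlimitedDensity

theorem tendsto_of_forall_tendsto_integral_bandlimited (hB0 : ∀ u, 0 ≤ B u) (hBM : ∀ u, B u ≤ M)
    (hmono : Monotone fun u => Real.exp u * B u)
    (hlim : ∀ K, IsBandlimitedDensity K →
      Tendsto (fun x => ∫ v, K v * B (x + v)) atTop (𝓝 A)) :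
    Tendsto B atTop (𝓝 A) := by
  have hM : 0 ≤ M := (hB0 0).trans (hBM 0)
  have hevent {f : ℝ → ℝ} (hf : ContinuousAt f 0) {s : Set ℝ} (hs : s ∈ 𝓝 (f 0)) :
      ∃ η, f η ∈ s ∧ 0 < η ∧ η < 1 := by
    have hsmall : ∀ᶠ η : ℝ in 𝓝[>] 0, f η ∈ s :=
      (hf.eventually_mem hs).filter_mono nhdsWithin_le_nhds
    exact (hsmall.and (Ioo_mem_nhdsGT one_pos)).exists
  refine tendsto_order.2 ⟨fun C hC => ?_, fun C hC => ?_⟩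
  · obtain ⟨η, hη, hη0, -⟩ := hevent
      (f := fun η => (A - η - M * η) / Real.exp (2 * η)) (s := Set.Ioi C)
      (ContinuousAt.div (by fun_prop) (by fun_prop) (Real.exp_ne_zero _))
      (Ioi_mem_nhds (by simpa using hC))
    obtain ⟨K, hK, hKη⟩ := IsBandlimitedDensity.exists_concentrated hη0 hη0
    have hshift := (hlim K hK).comp (tendsto_atTop_add_const_right _ (-η) tendsto_id)
    filter_upwards [hshift.eventually_const_le (sub_lt_self A hη0)] with x hx
    refine lt_of_lt_of_le hη ((div_le_iff₀ (Real.exp_pos _)).2 ?_)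
    have hle := hK.integral_mul_le hB0 hBM hmono hη0.le x
    simp only [Function.comp, id, ← sub_eq_add_neg] at hx
    nlinarith
  · obtain ⟨η, hη, hη0, hη1⟩ := hevent
      (f := fun η => Real.exp (2 * η) * (A + η) / (1 - η)) (s := Set.Iio C)
      (ContinuousAt.div (by fun_prop) (by fun_prop) (by norm_num))
      (Iio_mem_nhds (by simpa using hC))
    obtain ⟨K, hK, hKη⟩ := IsBandlimitedDensity.exists_concentrated hη0 hη0
    have hshift := (hlim K hK).comp (tendsto_atTop_add_const_right _ η tendsto_id)
    filter_upwards [hshift.eventually_le_const (lt_add_of_pos_right A hη0)] with x hx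
    refine lt_of_le_of_lt ((le_div_iff₀ (sub_pos.2 hη1)).2 ?_) hη
    calc B x * (1 - η) ≤ B x * ∫ v in -η..η, K v := mul_le_mul_of_nonneg_left hKη (hB0 x)
      _ ≤ Real.exp (2 * η) * ∫ v, K v * B (x + η + v) :=
          hK.mul_intervalIntegral_le hB0 hBM hmono hη0.le x
      _ ≤ Real.exp (2 * η) * (A + η) := mul_le_mul_of_nonneg_left hx (Real.exp_nonneg _)

lemma tendsto_setIntegral_Iic_comp_sub_mul_zero (hK : Integrable K) {b : ℝ → ℝ}
    (hb : ∀ u, |b u| ≤ M) :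
    Tendsto (fun x => ∫ u in Set.Iic 0, K (u - x) * b u) atTop (𝓝 0) := by
  have htail : Tendsto (fun x : ℝ => M * ∫ v in Set.Iic (-x), |K v|) atTop (𝓝 0) := by
    simpa using (tendsto_integral_Iic_zero tendsto_neg_atTop_atBot).const_mul M
  refine squeeze_zero_norm (fun x => ?_) htail
  calc ‖∫ u in Set.Iic 0, K (u - x) * b u‖ ≤ ∫ u in Set.Iic 0, M * |K (u - x)| := by
        refine norm_integral_le_of_norm_le ((hK.comp_sub_right x).abs.const_mul M).integrableOn
          (Eventually.of_forall fun u => ?_)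
        rw [norm_mul, Real.norm_eq_abs, Real.norm_eq_abs, mul_comm]
        exact mul_le_mul_of_nonneg_right (hb u) (abs_nonneg _)
    _ = M * ∫ v in Set.Iic (-x), |K v| := by
        have hshift := (measurePreserving_sub_right volume x).setIntegral_preimage_emb
          (measurableEmbedding_subRight x) (fun v => |K v|) (Set.Iic (-x))
        rw [integral_const_mul, ← hshift, Set.preimage_sub_const_Iic, neg_add_cancel]

theorem tendsto_of_laplace_eq {G : ℂ → ℂ} (hB0 : ∀ u, 0 ≤ B u) (hBM : ∀ u, B u ≤ M)
    (hmono : Monotone fun u => Real.exp u * B u) (hG : ContinuousOn G {z | 0 ≤ z.re})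
    (hBG : ∀ z : ℂ, 0 < z.re →
      ∫ u in Set.Ioi (0 : ℝ), Complex.exp (-z * u) * (B u - A : ℝ) = G z) :
    Tendsto B atTop (𝓝 A) := by
  have hB : Measurable B := measurable_of_monotone_exp_mul hmono
  have hbM (u : ℝ) : |B u - A| ≤ M + |A| :=
    (abs_sub _ _).trans (add_le_add_left ((abs_of_nonneg (hB0 u)).le.trans (hBM u)) _)
  refine tendsto_of_forall_tendsto_integral_bandlimited hB0 hBM hmono fun K hK => ?_
  obtain ⟨φ, hφ, hφs, hF⟩ := hK.exists_fourier_eq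
  have hφF : 𝓕 φ = fun v => (K v : ℂ) := funext hF
  have hpos : Tendsto (fun x => ∫ u in Set.Ioi 0, K (u - x) * (B u - A)) atTop (𝓝 0) := by
    have hlim := tendsto_setIntegral_fourier_sub_mul_zero hφ hφs (hφF ▸ hK.integrable.ofReal)
      (b := fun u => (B u - A : ℝ)) (M := M + |A|)
      (Complex.measurable_ofReal.comp (hB.sub_const A)).aestronglyMeasurable
      (fun u => (Complex.norm_real _).trans_le (hbM u)) hG hBG
    simp only [hφF, ← Complex.ofReal_mul, integral_complex_ofReal] at hlim
    rwa [← tendsto_ofReal_iff, Complex.ofReal_zero]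
  have hneg := tendsto_setIntegral_Iic_comp_sub_mul_zero hK.integrable hbM
  refine (((hneg.add hpos).add_const A).congr fun x => ?_).trans (by simp)
  have hint : Integrable fun u => K (u - x) * (B u - A) :=
    (hK.integrable.comp_sub_right x).mul_bdd (hB.sub_const A).aestronglyMeasurable
      (Eventually.of_forall hbM)
  calc (∫ u in Set.Iic 0, K (u - x) * (B u - A)) + (∫ u in Set.Ioi 0, K (u - x) * (B u - A)) + A
      = (∫ u, K (u - x) * (B u - A)) + A := by
        rw [← integral_add_compl measurableSet_Iic hint, Set.compl_Iic]
    _ = (∫ v, K v * (B (x + v) - A)) + A := by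
        rw [← integral_add_right_eq_self _ x]
        simp [add_comm]
    _ = ∫ v, K v * B (x + v) := by
        simp only [mul_sub]
        rw [integral_sub (integrable_mul_comp_add_left hK.integrable hB hB0 hBM x)
          (hK.integrable.mul_const A), integral_mul_const, hK.integral_eq_one, one_mul,
          sub_add_cancel]

end Tauberian

section WienerIkehara

lemma setIntegral_exp_neg_mul_comp_exp (S : ℝ → ℝ) (z : ℂ) :
    ∫ u in Set.Ioi (0 : ℝ), Complex.exp (-z * u) * (Real.exp (-u) * S (Real.exp u) : ℝ) =
      ∫ t in Set.Ioi (1 : ℝ), S t * (t : ℂ) ^ (-((1 + z) + 1)) := by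
  rw [← Real.exp_zero, ← integral_comp_exp_Ioi]
  refine setIntegral_congr_fun measurableSet_Ioi fun u _ => ?_
  have hpow : (Real.exp u : ℂ) ^ (-((1 + z) + 1)) = Complex.exp (-((1 + z) + 1) * u) := by
    rw [Complex.cpow_def_of_ne_zero (by simp), ← Complex.ofReal_log (Real.exp_nonneg u),
      Real.log_exp, mul_comm]
  have hexp : Complex.exp (-z * u) * Complex.exp (-u) =
      Complex.exp u * Complex.exp (-((1 + z) + 1) * u) := by
    rw [← Complex.exp_add, ← Complex.exp_add]
    ring_nf
  simp only [hpow, Complex.real_smul]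
  push_cast
  rw [← mul_assoc, hexp]
  ring

lemma setIntegral_exp_neg_mul_sub_const {B : ℝ → ℝ} {M : ℝ} (hB : Measurable B)
    (hBM : ∀ u, |B u| ≤ M) (A : ℝ) {z : ℂ} (hz : 0 < z.re) :
    ∫ u in Set.Ioi (0 : ℝ), Complex.exp (-z * u) * (B u - A : ℝ) =
      (∫ u in Set.Ioi (0 : ℝ), Complex.exp (-z * u) * B u) - A / z := by
  have hz' : (-z).re < 0 := by simpa using hz
  have hexp : IntegrableOn (fun u : ℝ => Complex.exp (-z * u)) (Set.Ioi 0) :=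
    integrableOn_exp_mul_complex_Ioi hz' 0
  have hBint : IntegrableOn (fun u : ℝ => Complex.exp (-z * u) * B u) (Set.Ioi 0) :=
    hexp.mul_bdd (c := M) (Complex.measurable_ofReal.comp hB).aestronglyMeasurable
      (Eventually.of_forall fun u => (Complex.norm_real _).trans_le (hBM u))
  simp only [Complex.ofReal_sub, mul_sub]
  rw [integral_sub hBint (hexp.mul_const _), integral_mul_const,
    integral_exp_mul_complex_Ioi hz' 0]
  simp [div_eq_inv_mul]

theorem tendsto_div_of_mellin_eq {S : ℝ → ℝ} {A C : ℝ} {G : ℂ → ℂ} (hS : Monotone S)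
    (hS0 : ∀ x, 0 ≤ S x) (hSC : ∀ x, 0 ≤ x → S x ≤ C * x) (hG : ContinuousOn G {s | 1 ≤ s.re})
    (hSG : ∀ s : ℂ, 1 < s.re →
      s * ∫ t in Set.Ioi (1 : ℝ), S t * (t : ℂ) ^ (-(s + 1)) = A / (s - 1) + G s) :
    Tendsto (fun x => S x / x) atTop (𝓝 A) := by
  let B : ℝ → ℝ := fun u => Real.exp (-u) * S (Real.exp u)
  have B_nonneg (u : ℝ) : 0 ≤ B u := mul_nonneg (Real.exp_nonneg _) (hS0 _)
  have B_le (u : ℝ) : B u ≤ C := by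
    have hle := mul_le_mul_of_nonneg_left (hSC _ (Real.exp_nonneg u)) (Real.exp_nonneg (-u))
    rwa [mul_left_comm, ← Real.exp_add, neg_add_cancel, Real.exp_zero, mul_one] at hle
  have exp_mul_B (u : ℝ) : Real.exp u * B u = S (Real.exp u) := by
    simp only [B, ← mul_assoc, ← Real.exp_add, add_neg_cancel, Real.exp_zero, one_mul]
  have B_mono : Monotone fun u => Real.exp u * B u := fun u v huv => by
    simpa only [exp_mul_B] using hS (Real.exp_monotone huv)
  have hlim : Tendsto B atTop (𝓝 A) := by
    refine tendsto_of_laplace_eq (G := fun z => (G (1 + z) - A) / (1 + z)) B_nonneg B_le B_mono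
      (.div ((hG.comp (by fun_prop) fun z hz => by simpa using hz).sub continuousOn_const)
        (by fun_prop) fun z (hz : 0 ≤ z.re) h0 => ?_) fun z hz => ?_
    · have hre : 1 ≤ (1 + z).re := by simpa using hz
      norm_num [h0] at hre
    · have hs : 1 < (1 + z).re := by simpa using hz
      have hz0 : z ≠ 0 := by rintro rfl; simp at hz
      have hz1 : 1 + z ≠ 0 := fun h0 => by norm_num [h0] at hs
      have hSz := hSG _ hs
      rw [← setIntegral_exp_neg_mul_comp_exp, add_sub_cancel_left] at hSz
      rw [setIntegral_exp_neg_mul_sub_const (measurable_of_monotone_exp_mul B_mono)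
        (fun u => (abs_of_nonneg (B_nonneg u)).trans_le (B_le u)) A hz, eq_div_iff hz1, sub_mul,
        mul_comm, hSz]
      field_simp
      ring
  refine (hlim.comp Real.tendsto_log_atTop).congr' ?_
  filter_upwards [eventually_gt_atTop 0] with x hx
  simp only [Function.comp, B, Real.exp_neg, Real.exp_log hx, div_eq_inv_mul]

lemma exists_sum_Icc_floor_le {a : ℕ → ℝ} (ha : ∀ n, 0 ≤ a n)
    (hO : (fun n => ∑ k ∈ Finset.Icc 1 n, a k) =O[atTop] fun n : ℕ => (n : ℝ)) :
    ∃ C, ∀ x : ℝ, 0 ≤ x → ∑ n ∈ Finset.Icc 1 ⌊x⌋₊, a n ≤ C * x := by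
  obtain ⟨C, hC⟩ := (isBigO_nat_atTop_iff (by simp)).1 hO
  have hC0 : 0 ≤ C := by simpa using (norm_nonneg _).trans (hC 1)
  refine ⟨C, fun x hx => ?_⟩
  calc ∑ n ∈ Finset.Icc 1 ⌊x⌋₊, a n ≤ C * ⌊x⌋₊ := by
        simpa [abs_of_nonneg (Finset.sum_nonneg fun k _ => ha k)] using hC ⌊x⌋₊
    _ ≤ C * x := mul_le_mul_of_nonneg_left (Nat.floor_le hx) hC0

theorem wiener_ikehara {a : ℕ → ℝ} {A : ℝ} {G : ℂ → ℂ} (ha : ∀ n, 0 ≤ a n)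
    (hO : (fun n => ∑ k ∈ Finset.Icc 1 n, a k) =O[atTop] fun n : ℕ => (n : ℝ))
    (hG : ContinuousOn G {s | 1 ≤ s.re})
    (haG : ∀ s : ℂ, 1 < s.re → LSeries (fun n => a n) s = A / (s - 1) + G s) :
    Tendsto (fun x : ℝ => (∑ n ∈ Finset.Icc 1 ⌊x⌋₊, a n) / x) atTop (𝓝 A) := by
  obtain ⟨C, hC⟩ := exists_sum_Icc_floor_le ha hO
  refine tendsto_div_of_mellin_eq (fun x y hxy => Finset.sum_le_sum_of_subset_of_nonneg
    (Finset.Icc_subset_Icc_right (Nat.floor_mono hxy)) fun n _ _ => ha n)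
    (fun x => Finset.sum_nonneg fun n _ => ha n) hC hG fun s hs => ?_
  rw [← haG s hs, LSeries_eq_mul_integral_of_nonneg a zero_le_one hs (by simpa using hO) ha]
  push_cast
  rfl

end WienerIkehara

section PrimeNumberTheorem

open ArithmeticFunction ArithmeticFunction.vonMangoldt

theorem tendsto_psi_div : Tendsto (fun x => Chebyshev.psi x / x) atTop (𝓝 1) := by
  have hres : residueClass (1 : ZMod 1) = fun n => vonMangoldt n := by
    ext n
    simp [residueClass, Set.indicator, Subsingleton.elim _ (1 : ZMod 1)]
  refine wiener_ikehara (G := LFunctionResidueClassAux (1 : ZMod 1)) (fun n => vonMangoldt_nonneg)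
    ?_ (continuousOn_LFunctionResidueClassAux 1) fun s hs => ?_
  · refine IsBigO.of_bound (Real.log 4 + 4) (Eventually.of_forall fun n => ?_)
    have hle := Chebyshev.psi_le_const_mul_self n.cast_nonneg
    rw [Real.norm_of_nonneg (Finset.sum_nonneg fun _ _ => vonMangoldt_nonneg), Real.norm_natCast]
    rwa [Chebyshev.psi, Nat.floor_natCast] at hle
  · rw [eqOn_LFunctionResidueClassAux isUnit_one hs, hres]
    simp

theorem tendsto_theta_div : Tendsto (fun x => Chebyshev.theta x / x) atTop (𝓝 1) := by
  have hsqrt : Real.sqrt =o[atTop] fun x => x := by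
    refine isLittleO_of_tendsto (fun x hx => by simp [hx]) ?_
    simpa only [Real.sqrt_div_self, one_div] using Real.tendsto_sqrt_atTop.const_div_atTop 1
  have hdiff : Tendsto (fun x => (Chebyshev.psi x - Chebyshev.theta x) / x) atTop (𝓝 0) :=
    (Chebyshev.isBigO_psi_sub_theta_sqrt.trans_isLittleO hsqrt).tendsto_div_nhds_zero
  simpa [sub_div] using tendsto_psi_div.sub hdiff

theorem tendsto_primeCounting_div :
    Tendsto (fun x : ℝ => (Nat.primeCounting ⌊x⌋₊ : ℝ) / (x / Real.log x)) atTop (𝓝 1) := by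
  have hlog : (fun x : ℝ => x / Real.log x ^ 2) =o[atTop] fun x => x / Real.log x := by
    refine isLittleO_of_tendsto' ?_ ?_
    · filter_upwards with x hx
      rcases div_eq_zero_iff.1 hx with hx | hx <;> simp [hx]
    · refine Real.tendsto_log_atTop.inv_tendsto_atTop.congr' ?_
      filter_upwards [eventually_gt_atTop 1] with x hx
      have := Real.log_pos hx
      simp only [Pi.inv_apply]
      field_simp
  have hdiff := (Chebyshev.primeCounting_sub_theta_div_log_isBigO.trans_isLittleO
    hlog).tendsto_div_nhds_zero
  refine ((hdiff.add tendsto_theta_div).congr' ?_).trans (by simp)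
  filter_upwards [eventually_gt_atTop 1] with x hx
  have := Real.log_pos hx
  field_simp
  ring

end PrimeNumberTheorem

section RegularVariation

/-- Regular variation at infinity with index `α`, in Karamata's sense. Where `f x = 0` the quotient
is the junk value `0`; since `t = 1` is allowed, this can only happen for bounded `x`. -/
def IsRegularlyVarying (f : ℝ → ℝ) (α : ℝ) : Prop :=
  ∀ t > 0, Tendsto (fun x => f (t * x) / f x) atTop (𝓝 (t ^ α))

namespace IsRegularlyVarying

variable {f g : ℝ → ℝ} {α β : ℝ}

lemma eventually_ne_zero (hf : IsRegularlyVarying f α) : ∀ᶠ x in atTop, f x ≠ 0 := by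
  filter_upwards [(hf 1 one_pos).eventually_ne (by simp : (1 : ℝ) ^ α ≠ 0)] with x hx h0
  simp [h0] at hx

lemma mul (hf : IsRegularlyVarying f α) (hg : IsRegularlyVarying g β) :
    IsRegularlyVarying (fun x => f x * g x) (α + β) := fun t ht => by
  simpa only [Real.rpow_add ht, mul_div_mul_comm] using (hf t ht).mul (hg t ht)

lemma of_tendsto_div (hf : IsRegularlyVarying f α) {c : ℝ} (hc : c ≠ 0)
    (hgf : Tendsto (fun x => g x / f x) atTop (𝓝 c)) : IsRegularlyVarying g α := fun t ht => by
  have hscale : Tendsto (fun x : ℝ => t * x) atTop atTop := tendsto_id.const_mul_atTop ht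
  have hlim := ((hgf.comp hscale).div hgf hc).mul (hf t ht)
  rw [div_self hc, one_mul] at hlim
  refine hlim.congr' ?_
  filter_upwards [hf.eventually_ne_zero, hscale.eventually hf.eventually_ne_zero] with x hx htx
  simp only [Pi.div_apply, Function.comp]
  field_simp

lemma eventually_pos (hf : IsRegularlyVarying f α) (hf0 : ∀ x, 0 ≤ f x) :
    ∀ᶠ x in atTop, 0 < f x :=
  hf.eventually_ne_zero.mono fun x hx => (hf0 x).lt_of_ne' hx

lemma index_nonneg (hf : IsRegularlyVarying f α) (hmono : Monotone f) (hf0 : ∀ x, 0 ≤ f x) :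
    0 ≤ α := by
  have hle : (1 : ℝ) ≤ 2 ^ α := by
    refine ge_of_tendsto (hf 2 two_pos) ?_
    filter_upwards [hf.eventually_pos hf0, eventually_ge_atTop 0] with x hfx hx
    exact (one_le_div hfx).2 (hmono (by linarith))
  rwa [← Real.rpow_zero 2, Real.rpow_le_rpow_left_iff one_lt_two] at hle

lemma tendsto_atTop (hf : IsRegularlyVarying f α) (hmono : Monotone f) (hf0 : ∀ x, 0 ≤ f x)
    (hα : 0 < α) : Tendsto f atTop atTop := by
  refine (tendsto_atTop_of_monotone hmono).resolve_right fun ⟨L, hL⟩ => ?_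
  have hL0 : L ≠ 0 := by
    obtain ⟨x, hx⟩ := (hf.eventually_pos hf0).exists
    exact (hx.trans_le (hmono.ge_of_tendsto hL x)).ne'
  have hone : Tendsto (fun x => f (2 * x) / f x) atTop (𝓝 (L / L)) :=
    (hL.comp (tendsto_id.const_mul_atTop two_pos)).div hL hL0
  rw [div_self hL0] at hone
  exact (Real.one_lt_rpow one_lt_two hα).ne (tendsto_nhds_unique hone (hf 2 two_pos))

theorem tendsto_intervalIntegral_div (hf : IsRegularlyVarying f α) (hmono : Monotone f)
    (hf0 : ∀ x, 0 ≤ f x) :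
    Tendsto (fun x => (∫ u in 0..x, f u) / (x * f x)) atTop (𝓝 (1 / (α + 1))) := by
  have hα := hf.index_nonneg hmono hf0
  have hlim : Tendsto (fun x => ∫ t in (0 : ℝ)..1, f (t * x) / f x) atTop
      (𝓝 (∫ t in (0 : ℝ)..1, t ^ α)) := by
    refine intervalIntegral.tendsto_integral_filter_of_dominated_convergence (fun _ => 1)
      (Eventually.of_forall fun x => ?_) ?_ intervalIntegrable_const (ae_of_all _ fun t ht => ?_)
    · exact ((hmono.measurable.comp (measurable_id.mul_const x)).div_const _).aestronglyMeasurable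
    · filter_upwards [eventually_ge_atTop 0] with x hx
      refine ae_of_all _ fun t ht => ?_
      rw [Set.uIoc_of_le zero_le_one] at ht
      rw [Real.norm_of_nonneg (div_nonneg (hf0 _) (hf0 _))]
      exact div_le_one_of_le₀ (hmono (mul_le_of_le_one_left hx ht.2)) (hf0 x)
    · rw [Set.uIoc_of_le zero_le_one] at ht
      exact hf t ht.1
  rw [integral_rpow (Or.inl (by linarith)), Real.one_rpow, Real.zero_rpow (by linarith),
    sub_zero] at hlim
  refine hlim.congr' ?_
  filter_upwards [eventually_gt_atTop 0] with x hx
  rw [intervalIntegral.integral_div, intervalIntegral.integral_comp_mul_right _ hx.ne', zero_mul,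
    one_mul, smul_eq_mul, inv_mul_eq_div, div_div]

end IsRegularlyVarying

lemma isRegularlyVarying_div_log : IsRegularlyVarying (fun x => x / Real.log x) 1 := fun t ht => by
  have hlog : Tendsto (fun x => Real.log t / Real.log x) atTop (𝓝 0) :=
    Real.tendsto_log_atTop.const_div_atTop _
  have hlim : Tendsto (fun x => t / (Real.log t / Real.log x + 1)) atTop (𝓝 (t ^ (1 : ℝ))) := by
    simpa [Pi.div_def] using (tendsto_const_nhds (x := t)).div (hlog.add_const 1) (by simp)
  refine hlim.congr' ?_
  filter_upwards [eventually_gt_atTop 1] with x hx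
  have hlogx := Real.log_pos hx
  rw [Real.log_mul ht.ne' (by linarith), div_add_one hlogx.ne']
  field_simp

/-- Pólya's refinement of pointwise convergence: monotonicity squeezes `F i` between its values at
the two ends of an interval on which `g` is nearly constant. -/
lemma tendstoLocallyUniformly_of_monotone {X ι : Type*} [LinearOrder X] [TopologicalSpace X]
    [OrderTopology X] {l : Filter ι} {F : ι → X → ℝ} {g : X → ℝ}
    (hF : ∀ᶠ i in l, Monotone (F i)) (hg : Continuous g)
    (hFg : ∀ x, Tendsto (fun i => F i x) l (𝓝 (g x))) : TendstoLocallyUniformly F g l := by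
  refine Metric.tendstoLocallyUniformly_iff.2 fun ε hε x => ?_
  have hball : g ⁻¹' Metric.ball (g x) (ε / 4) ∈ 𝓝 x :=
    hg.continuousAt (Metric.ball_mem_nhds _ (by linarith))
  obtain ⟨a, b, hx, hab, hsub⟩ := exists_Icc_mem_subset_of_mem_nhds hball
  have hga := hsub (Set.left_mem_Icc.2 (hx.1.trans hx.2))
  have hgb := hsub (Set.right_mem_Icc.2 (hx.1.trans hx.2))
  refine ⟨_, hab, ?_⟩
  filter_upwards [hF, (hFg a).eventually (Metric.ball_mem_nhds _ (by linarith : 0 < ε / 4)),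
    (hFg b).eventually (Metric.ball_mem_nhds _ (by linarith : 0 < ε / 4))] with i hi hia hib y hy
  have hgy := hsub hy
  simp only [Set.mem_preimage, Metric.mem_ball, Real.dist_eq, abs_lt] at hga hgb hgy hia hib ⊢
  have hay := hi hy.1
  have hyb := hi hy.2
  constructor <;> linarith

theorem IsRegularlyVarying.tendstoUniformlyOn {f : ℝ → ℝ} {α : ℝ} (hf : IsRegularlyVarying f α)
    (hmono : Monotone f) (hf0 : ∀ x, 0 ≤ f x) (hα : 0 < α) :
    TendstoUniformlyOn (fun x t => f (t * x) / f x) (fun t => t ^ α) atTop (Set.Icc 0 1) := by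
  rw [tendstoUniformlyOn_iff_tendstoUniformly_comp_coe,
    ← tendstoLocallyUniformly_iff_tendstoUniformly_of_compactSpace]
  refine tendstoLocallyUniformly_of_monotone ?_
    ((Real.continuous_rpow_const hα.le).comp continuous_subtype_val) fun t => ?_
  · filter_upwards [eventually_ge_atTop 0] with x hx s t hst
    exact div_le_div_of_nonneg_right (hmono (mul_le_mul_of_nonneg_right hst hx)) (hf0 x)
  · rcases t.2.1.eq_or_lt with ht | ht
    · simpa [← ht, Real.zero_rpow hα.ne'] using
        (hf.tendsto_atTop hmono hf0 hα).const_div_atTop (f 0)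
    · exact hf t ht

end RegularVariation

section Summatory

open Finset.HasAntidiagonal (antidiagonal)

/-- The summatory function `x ↦ ∑_{k ≤ x} c k`. The sum starts at `k = 0`, and the value at a
negative real is `c 0`. -/
noncomputable def summatory (c : ℕ → ℝ) (x : ℝ) : ℝ := ∑ k ∈ Finset.Icc 0 ⌊x⌋₊, c k

variable {c d : ℕ → ℝ} {α : ℝ}

lemma summatory_nonneg (hc : ∀ n, 0 ≤ c n) (x : ℝ) : 0 ≤ summatory c x :=
  Finset.sum_nonneg fun n _ => hc n

lemma summatory_mono (hc : ∀ n, 0 ≤ c n) : Monotone (summatory c) := fun _ _ hxy =>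
  Finset.sum_le_sum_of_subset_of_nonneg (Finset.Icc_subset_Icc_right (Nat.floor_mono hxy))
    fun n _ _ => hc n

lemma summatory_natCast_mul (c : ℕ → ℝ) {x : ℝ} (hx : 0 ≤ x) :
    summatory (fun k => k * c k) x = x * summatory c x - ∫ t in 0..x, summatory c t := by
  have habel := sum_mul_eq_sub_integral_mul (f := fun t : ℝ => t) c hx
    (fun _ _ => differentiableAt_id) (by simp)
  simpa only [summatory, deriv_id'', one_mul, ← intervalIntegral.integral_of_le hx] using habel

theorem tendsto_summatory_natCast_mul_div (hc : ∀ n, 0 ≤ c n)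
    (hC : IsRegularlyVarying (summatory c) α) :
    Tendsto (fun x => summatory (fun k => k * c k) x / (x * summatory c x)) atTop
      (𝓝 (α / (α + 1))) := by
  have hα := hC.index_nonneg (summatory_mono hc) (summatory_nonneg hc)
  have hlim := (hC.tendsto_intervalIntegral_div (summatory_mono hc)
    (summatory_nonneg hc)).const_sub 1
  rw [one_sub_div (by linarith), add_sub_cancel_right] at hlim
  refine hlim.congr' ?_
  filter_upwards [eventually_gt_atTop 0, hC.eventually_ne_zero] with x hx hCx
  rw [summatory_natCast_mul c hx.le, sub_div, div_self (mul_ne_zero hx.ne' hCx)]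

lemma summatory_convolution (c d : ℕ → ℝ) (x : ℝ) :
    summatory (fun n => ∑ ij ∈ antidiagonal n, c ij.1 * d ij.2) x =
      ∑ i ∈ Finset.Icc 0 ⌊x⌋₊, c i * summatory d (x - i) := by
  simp only [summatory, Nat.floor_sub_natCast, Finset.mul_sum, Finset.sum_sigma']
  refine Finset.sum_nbij' (fun p => ⟨p.2.1, p.2.2⟩) (fun p => ⟨p.1 + p.2, (p.1, p.2)⟩)
    ?_ ?_ ?_ ?_ ?_ <;>
    simp only [Finset.mem_sigma, Finset.mem_Icc, Finset.HasAntidiagonal.mem_antidiagonal] <;> grind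

lemma abs_sum_sub_sum_le {ι : Type*} (s : Finset ι) {c u v : ι → ℝ} {ε : ℝ} (hc : ∀ i, 0 ≤ c i)
    (huv : ∀ i ∈ s, |u i - v i| ≤ ε) :
    |∑ i ∈ s, c i * u i - ∑ i ∈ s, c i * v i| ≤ (∑ i ∈ s, c i) * ε := by
  rw [← Finset.sum_sub_distrib, Finset.sum_mul]
  refine (Finset.abs_sum_le_sum_abs _ _).trans (Finset.sum_le_sum fun i hi => ?_)
  rw [← mul_sub, abs_mul, abs_of_nonneg (hc i)]
  exact mul_le_mul_of_nonneg_left (huv i hi) (hc i)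

lemma tendsto_sum_mul_one_sub_div (hc : ∀ n, 0 ≤ c n) (hC : IsRegularlyVarying (summatory c) α) :
    Tendsto (fun x => (∑ i ∈ Finset.Icc 0 ⌊x⌋₊, c i * (1 - i / x)) / summatory c x) atTop
      (𝓝 (1 / (α + 1))) := by
  have hα := hC.index_nonneg (summatory_mono hc) (summatory_nonneg hc)
  have hlim := (tendsto_summatory_natCast_mul_div hc hC).const_sub 1
  rw [one_sub_div (by linarith), add_sub_cancel_left] at hlim
  refine hlim.congr' ?_
  filter_upwards [eventually_gt_atTop 0, hC.eventually_ne_zero] with x hx hCx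
  have hsum : ∑ i ∈ Finset.Icc 0 ⌊x⌋₊, c i * (1 - i / x) =
      summatory c x - summatory (fun k => k * c k) x / x := by
    simp only [summatory, mul_sub, mul_one, Finset.sum_sub_distrib, Finset.sum_div]
    congr! 2
    ring
  rw [hsum]
  field_simp

/-- Since `D := summatory d` is regularly varying of index `1`, `D (x - i) / D x` is close to
`1 - i / x` uniformly in `i ≤ x`, which reduces the convolution to a first moment of `c`. -/
theorem tendsto_summatory_convolution_div (hc : ∀ n, 0 ≤ c n) (hd : ∀ n, 0 ≤ d n)
    (hC : IsRegularlyVarying (summatory c) α) (hD : IsRegularlyVarying (summatory d) 1) :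
    Tendsto (fun x => summatory (fun n => ∑ ij ∈ antidiagonal n, c ij.1 * d ij.2) x /
      (summatory c x * summatory d x)) atTop (𝓝 (1 / (α + 1))) := by
  have hdiff : Tendsto (fun x => (∑ i ∈ Finset.Icc 0 ⌊x⌋₊, c i *
      (summatory d (x - i) / summatory d x) - ∑ i ∈ Finset.Icc 0 ⌊x⌋₊, c i * (1 - i / x)) /
      summatory c x) atTop (𝓝 0) := by
    refine Metric.tendsto_nhds.2 fun ε hε => ?_
    filter_upwards [eventually_gt_atTop 0, hC.eventually_pos (summatory_nonneg hc),
      Metric.tendstoUniformlyOn_iff.1 (hD.tendstoUniformlyOn (summatory_mono hd)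
        (summatory_nonneg hd) one_pos) (ε / 2) (half_pos hε)] with x hx hCx hunif
    rw [dist_zero_right, Real.norm_eq_abs, abs_div, abs_of_pos hCx, div_lt_iff₀ hCx, mul_comm]
    refine (abs_sum_sub_sum_le (ε := ε / 2) _ hc fun i hi => ?_).trans_lt
      (mul_lt_mul_of_pos_left (half_lt_self hε) hCx)
    have hix : (i : ℝ) ≤ x := (Nat.le_floor_iff hx.le).1 (Finset.mem_Icc.1 hi).2
    have hclose := hunif (1 - i / x) ⟨sub_nonneg.2 (div_le_one_of_le₀ hix hx.le),
      sub_le_self _ (by positivity)⟩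
    rw [Real.rpow_one, sub_mul, one_mul, div_mul_cancel₀ _ hx.ne', dist_comm] at hclose
    exact hclose.le
  have hlim := hdiff.add (tendsto_sum_mul_one_sub_div hc hC)
  rw [zero_add] at hlim
  refine hlim.congr fun x => ?_
  rw [← add_div, sub_add_cancel, summatory_convolution]
  simp only [mul_div, ← Finset.sum_div]
  rw [div_div, mul_comm]

end Summatory

section Goldbach

open Finset.HasAntidiagonal (antidiagonal)

/-- The indicator function of the odd primes. -/
noncomputable def oddPrimeIndicator (n : ℕ) : ℝ := if n.Prime ∧ Odd n then 1 else 0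

lemma oddPrimeIndicator_nonneg (n : ℕ) : 0 ≤ oddPrimeIndicator n := by
  rw [oddPrimeIndicator]
  positivity

lemma summatory_oddPrimeIndicator {x : ℝ} (hx : 2 ≤ x) :
    summatory oddPrimeIndicator x = Nat.primeCounting ⌊x⌋₊ - 1 := by
  have hind (n : ℕ) : oddPrimeIndicator n =
      (if n.Prime then 1 else 0) - if n = 2 then 1 else 0 := by
    rcases eq_or_ne n 2 with rfl | hn
    · simp [oddPrimeIndicator, Nat.prime_two]
    · have hodd : n.Prime ∧ Odd n ↔ n.Prime := and_iff_left_of_imp fun hp => hp.odd_of_ne_two hn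
      simp only [oddPrimeIndicator, hodd, if_neg hn, sub_zero]
  have h2 : 2 ≤ ⌊x⌋₊ := Nat.le_floor (by exact_mod_cast hx)
  simp only [summatory, hind, Finset.sum_sub_distrib]
  rw [Finset.sum_ite_eq', if_pos (by simpa using h2), Finset.sum_boole, Nat.primeCounting,
    Nat.primeCounting', Nat.count_eq_card_filter_range, Nat.range_succ_eq_Icc_zero]

lemma isRegularlyVarying_summatory_oddPrimeIndicator :
    IsRegularlyVarying (summatory oddPrimeIndicator) 1 := by
  refine isRegularlyVarying_div_log.of_tendsto_div one_ne_zero ?_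
  have hlim := tendsto_primeCounting_div.sub
    (Real.isLittleO_log_id_atTop.tendsto_div_nhds_zero)
  rw [sub_zero] at hlim
  refine hlim.congr' ?_
  filter_upwards [eventually_ge_atTop 2] with x hx
  rw [summatory_oddPrimeIndicator hx, sub_div, one_div_div, id]

lemma two_mul_sum_antidiagonal_le {R : Type*} [CommSemiring R] (a : ℕ → R) (k : ℕ) :
    2 * ∑ p ∈ antidiagonal (2 * k) with p.1 ≤ p.2, a p.1 * a p.2 =
      ∑ p ∈ antidiagonal (2 * k), a p.1 * a p.2 + a k * a k := by
  have hswap : ∑ p ∈ antidiagonal (2 * k) with p.1 ≤ p.2, a p.1 * a p.2 =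
      ∑ p ∈ antidiagonal (2 * k) with p.2 ≤ p.1, a p.1 * a p.2 := by
    simp only [Finset.sum_filter]
    rw [← Finset.Nat.sum_antidiagonal_swap]
    simp [mul_comm]
  have hunion : (antidiagonal (2 * k)).filter (fun p => p.1 ≤ p.2) ∪
      (antidiagonal (2 * k)).filter (fun p => p.2 ≤ p.1) = antidiagonal (2 * k) := by
    rw [← Finset.filter_or, Finset.filter_true_of_mem fun p _ => le_total p.1 p.2]
  have hinter : (antidiagonal (2 * k)).filter (fun p => p.1 ≤ p.2) ∩
      (antidiagonal (2 * k)).filter (fun p => p.2 ≤ p.1) = {(k, k)} := by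
    ext ⟨p, q⟩
    simp only [Finset.mem_inter, Finset.mem_filter, Finset.HasAntidiagonal.mem_antidiagonal,
      Finset.mem_singleton, Prod.mk.injEq]
    omega
  rw [two_mul]
  nth_rw 2 [hswap]
  rw [← Finset.sum_union_inter, hunion, hinter, Finset.sum_singleton]

lemma Q2_eq_sum_antidiagonal (k : ℕ) : (Q2 k : ℝ) =
    ∑ p ∈ antidiagonal (2 * k) with p.1 ≤ p.2, oddPrimeIndicator p.1 * oddPrimeIndicator p.2 := by
  simp only [oddPrimeIndicator, ite_zero_mul_ite_zero, mul_one, Finset.sum_boole,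
    Finset.filter_filter, Q2]
  congr 2
  ext ⟨p, q⟩
  simp only [Finset.mem_filter, Finset.mem_product, Finset.mem_range,
    Finset.HasAntidiagonal.mem_antidiagonal]
  grind

lemma two_mul_Q2 (k : ℕ) : 2 * (Q2 k : ℝ) =
    ∑ p ∈ antidiagonal (2 * k), oddPrimeIndicator p.1 * oddPrimeIndicator p.2 +
      oddPrimeIndicator k := by
  rw [Q2_eq_sum_antidiagonal, two_mul_sum_antidiagonal_le]
  congr 1
  simp [oddPrimeIndicator]

lemma sum_antidiagonal_oddPrimeIndicator_of_odd {n : ℕ} (hn : Odd n) :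
    ∑ p ∈ antidiagonal n, oddPrimeIndicator p.1 * oddPrimeIndicator p.2 = 0 := by
  refine Finset.sum_eq_zero fun p hp => ?_
  rw [← Finset.HasAntidiagonal.mem_antidiagonal.1 hp, Nat.odd_add] at hn
  simp only [oddPrimeIndicator, ite_zero_mul_ite_zero]
  exact if_neg fun h => Nat.not_even_iff_odd.2 h.2.2 (hn.1 h.1.2)

lemma summatory_two_mul {c : ℕ → ℝ} (hc : ∀ n, Odd n → c n = 0) {x : ℝ} (hx : 0 ≤ x) :
    summatory c (2 * x) = summatory (fun k => c (2 * k)) x := by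
  refine (Finset.sum_of_injOn (2 * ·) (fun _ _ _ _ h => by simpa using h) (fun k hk => ?_)
    (fun n hn hnot => hc n ?_) fun _ _ => rfl).symm
  · simp only [Finset.coe_Icc, Set.mem_Icc, zero_le, true_and, Nat.le_floor_iff hx] at hk
    simp [Nat.le_floor_iff, hx, hk]
  · rw [← Nat.not_even_iff_odd]
    rintro ⟨k, rfl⟩
    refine hnot ⟨k, ?_, two_mul k⟩
    rw [Finset.mem_Icc, Nat.le_floor_iff (by positivity)] at hn
    simp only [Finset.coe_Icc, Set.mem_Icc, zero_le, true_and, Nat.le_floor_iff hx]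
    push_cast at hn
    linarith

lemma two_mul_summatory_Q2 {x : ℝ} (hx : 0 ≤ x) : 2 * summatory (fun k => Q2 k) x =
    summatory (fun n => ∑ p ∈ antidiagonal n, oddPrimeIndicator p.1 * oddPrimeIndicator p.2)
      (2 * x) + summatory oddPrimeIndicator x := by
  rw [summatory_two_mul (fun n => sum_antidiagonal_oddPrimeIndicator_of_odd) hx]
  simp only [summatory, Finset.mul_sum, two_mul_Q2, Finset.sum_add_distrib]

theorem tendsto_summatory_Q2_div : Tendsto (fun x => summatory (fun k => Q2 k) x /
    (summatory oddPrimeIndicator x * summatory oddPrimeIndicator x)) atTop (𝓝 1) := by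
  have hreg := isRegularlyVarying_summatory_oddPrimeIndicator
  have hscale : Tendsto (fun x : ℝ => 2 * x) atTop atTop := tendsto_id.const_mul_atTop two_pos
  have hconv := (tendsto_summatory_convolution_div oddPrimeIndicator_nonneg
    oddPrimeIndicator_nonneg hreg hreg).comp hscale
  have hdouble := (hreg 2 two_pos).mul (hreg 2 two_pos)
  have hinv := (hreg.tendsto_atTop (summatory_mono oddPrimeIndicator_nonneg)
    (summatory_nonneg oddPrimeIndicator_nonneg) one_pos).inv_tendsto_atTop
  have hlim := ((hconv.mul hdouble).add hinv).div_const 2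
  rw [show (1 / (1 + 1) * ((2 : ℝ) ^ (1 : ℝ) * 2 ^ (1 : ℝ)) + 0) / 2 = 1 by norm_num] at hlim
  refine hlim.congr' ?_
  filter_upwards [eventually_ge_atTop 0, hreg.eventually_ne_zero,
    hscale.eventually hreg.eventually_ne_zero] with x hx hCx hC2x
  rw [eq_comm, ← mul_div_mul_left _ _ two_ne_zero, two_mul_summatory_Q2 hx]
  simp only [Pi.inv_apply, Function.comp_apply]
  field_simp

lemma isRegularlyVarying_summatory_Q2 : IsRegularlyVarying (summatory fun k => Q2 k) 2 := by
  have hreg := isRegularlyVarying_summatory_oddPrimeIndicator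
  rw [← one_add_one_eq_two]
  exact (hreg.mul hreg).of_tendsto_div one_ne_zero tendsto_summatory_Q2_div

lemma Q2_eq_zero_of_lt {k : ℕ} (hk : k < 3) : Q2 k = 0 := by
  refine Finset.card_eq_zero.2 (Finset.filter_false_of_mem ?_)
  rintro ⟨p, q⟩ - ⟨hp, hq, -, hqo, -, hpq⟩
  have hp2 := hp.two_le
  have hq2 := hq.two_le
  grind

lemma sum_Icc_three_mul_Q2 (f : ℕ → ℝ) (n : ℕ) :
    ∑ k ∈ Finset.Icc 3 n, f k * Q2 k = summatory (fun k => f k * Q2 k) n := by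
  rw [summatory, Nat.floor_natCast]
  refine Finset.sum_subset (Finset.Icc_subset_Icc_left (by norm_num)) fun k hk hk3 => ?_
  rw [Q2_eq_zero_of_lt (by grind), Nat.cast_zero, mul_zero]

end Goldbach

/-- The limit of `(Σ_{2<k≤n} k·Q₂(2k)) / (n · Σ_{2<k≤n} Q₂(2k))` as `n → ∞` is `2/3`;
equivalently, `E(Gₙ)/n → 2/3` for a uniformly random Goldbach partition from `(4, 2n]`. -/
theorem mean_goldbach_number :
    Tendsto (fun n : ℕ =>
        (∑ k ∈ Finset.Icc 3 n, (k : ℝ) * (Q2 k : ℝ)) /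
          ((n : ℝ) * ∑ k ∈ Finset.Icc 3 n, (Q2 k : ℝ)))
      atTop (𝓝 (2 / 3)) := by
  have hmean := (tendsto_summatory_natCast_mul_div (fun k => (Q2 k).cast_nonneg)
    isRegularlyVarying_summatory_Q2).comp tendsto_natCast_atTop_atTop
  rw [show (2 : ℝ) / (2 + 1) = 2 / 3 by norm_num] at hmean
  refine hmean.congr fun n => ?_
  have hcount := sum_Icc_three_mul_Q2 1 n
  simp only [Pi.one_apply, one_mul] at hcount
  rw [sum_Icc_three_mul_Q2, hcount, Function.comp]
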